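/- Let G be a finite group and M a G-module (an abelian group with an action of G by group automorphisms) whose underlying abelian group is finitely generated. Then for every integer n ≥ 1 the group cohomology group H^n(G, M) is finite. -/

import Mathlib

/-- The representation of `G` on `M` over `ℤ` associated to an action of `G` on the abelian
group `M` by additive group automorphisms: this realizes the `G`-module `M` as an object of
`Rep ℤ G`, so that Mathlib's `groupCohomology` computes `H^n(G, M)`. -/
noncomputable def repOfGModule (G M : Type) [Group G] [AddCommGroup M] [DistribMulAction G M] :
    Rep ℤ G :=
  Rep.of
    { toFun := fun g => (DistribMulAction.toAddMonoidHom M g).toIntLinearMap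
      map_one' := by
        ext m
        simp
      map_mul' := by
        intro g h
        ext m
        simp [mul_smul] }

/-!
For a cochain `f` of degree `n + 1` let `h (g₁, …, gₙ) = ∑ x, f (g₁, …, gₙ, x)`. Sum the formula
for `(d f) (g₁, …, gₙ₊₁, x)` over `x`: the last face, which forgets `x`, gives `± |G| • f`, and the
others give `d h`, where the face involving `gₙ₊₁ * x` needs the substitution `x ↦ gₙ₊₁⁻¹ * x`. So
for a cocycle `f` the cochain `|G| • f` is a coboundary, and `|G|` kills cohomology in positive
degrees. As cochains with finitely generated coefficients on a finite group are finitely generated,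
over `ℤ` each positive-degree cohomology group is finitely generated and torsion, hence finite.
-/

universe u

section Tuples

variable {α : Type*} {n : ℕ} (op : α → α → α)

theorem snoc_comp_succ (g : Fin (n + 1) → α) (x : α) :
    (fun i : Fin (n + 1) => (Fin.snoc g x : Fin (n + 2) → α) i.succ) =
      Fin.snoc (fun i => g i.succ) x := by
  funext i
  cases i using Fin.lastCases with
  | last => simp only [Fin.succ_last, Fin.snoc_last]
  | cast i => simp only [Fin.succ_castSucc, Fin.snoc_castSucc]

theorem contractNth_last (g : Fin (n + 1) → α) :
    Fin.contractNth (Fin.last n) op g = Fin.init g :=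
  funext fun i => Fin.contractNth_apply_of_lt _ _ _ _ i.isLt

theorem contractNth_castSucc_last_snoc (g : Fin (n + 1) → α) (x : α) :
    Fin.contractNth (Fin.last n).castSucc op (Fin.snoc g x : Fin (n + 2) → α) =
      Fin.snoc (Fin.init g) (op (g (Fin.last n)) x) := by
  funext i
  cases i using Fin.lastCases with
  | last =>
    rw [Fin.contractNth_apply_of_eq _ _ _ _ (by simp)]
    simp only [Fin.snoc_castSucc, Fin.snoc_last, Fin.succ_last]
  | cast i =>
    rw [Fin.contractNth_apply_of_lt _ _ _ _ (by simp)]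
    simp only [Fin.snoc_castSucc, Fin.init]

theorem contractNth_castSucc_castSucc_snoc (j : Fin n) (g : Fin (n + 1) → α) (x : α) :
    Fin.contractNth j.castSucc.castSucc op (Fin.snoc g x : Fin (n + 2) → α) =
      Fin.snoc (Fin.contractNth j.castSucc op g) x := by
  funext i
  cases i using Fin.lastCases with
  | last =>
    rw [Fin.contractNth_apply_of_gt _ _ _ _ (by simp)]
    simp only [Fin.snoc_last, Fin.succ_last]
  | cast i =>
    simp only [Fin.snoc_castSucc, Fin.contractNth, Fin.succ_castSucc, Fin.val_castSucc]

end Tuples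

theorem sum_contractNth_castSucc_snoc {G M : Type*} [Group G] [Fintype G] [AddCommMonoid M] {n : ℕ}
    (f : (Fin (n + 1) → G) → M) (j : Fin (n + 1)) (g : Fin (n + 1) → G) :
    ∑ x : G, f (Fin.contractNth j.castSucc (· * ·) (Fin.snoc g x : Fin (n + 2) → G)) =
      ∑ x : G, f (Fin.snoc (Fin.contractNth j (· * ·) g) x) := by
  cases j using Fin.lastCases with
  | last =>
    simp only [contractNth_castSucc_last_snoc, contractNth_last]
    exact Equiv.sum_comp (Equiv.mulLeft (g (Fin.last n))) fun x => f (Fin.snoc (Fin.init g) x)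
  | cast j => simp only [contractNth_castSucc_castSucc_snoc]

/-- Summation of a cochain over its last argument. Up to sign this is the homotopy from
multiplication by `|G|` to zero in positive degrees. -/
def sumLast (k : Type*) {G M : Type*} [Semiring k] [Fintype G] [AddCommMonoid M] [Module k M]
    (n : ℕ) : ((Fin (n + 1) → G) → M) →ₗ[k] (Fin n → G) → M where
  toFun f g := ∑ x : G, f (Fin.snoc g x)
  map_add' _ _ := funext fun _ => Finset.sum_add_distrib
  map_smul' _ _ := funext fun _ => by simp only [Pi.smul_apply, Finset.smul_sum, RingHom.id_apply]

theorem sumLast_apply {k G M : Type*} [Semiring k] [Fintype G] [AddCommMonoid M] [Module k M]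
    {n : ℕ} (f : (Fin (n + 1) → G) → M) (g : Fin n → G) :
    sumLast k n f g = ∑ x : G, f (Fin.snoc g x) :=
  rfl

section Homology

variable {k ι : Type*} [CommRing k] {c : ComplexShape ι} {K : HomologicalComplex (ModuleCat k) c}

theorem homologyπ_eq_zero_of_iCycles_eq_d {i j : ι} {z : K.cycles j} {x : K.X i}
    (hz : K.iCycles j z = K.d i j x) : K.homologyπ j z = 0 := by
  have hzx : z = K.toCycles i j x := by
    apply (ModuleCat.mono_iff_injective (K.iCycles j)).1 inferInstance
    rw [hz, ← K.toCycles_i, ModuleCat.comp_apply]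
  rw [hzx, ← ModuleCat.comp_apply, K.toCycles_comp_homologyπ]
  rfl

theorem isTorsionBy_homology_of_smul_cycle_eq_d {i j l : ι} {r : k}
    (h : ∀ f : K.X j, K.d j l f = 0 → ∃ x : K.X i, K.d i j x = r • f) :
    Module.IsTorsionBy k (K.homology j) r := by
  intro y
  obtain ⟨z, rfl⟩ := (ModuleCat.epi_iff_surjective (K.homologyπ j)).1 inferInstance y
  have hz : K.d j l (K.iCycles j z) = 0 := by
    rw [← ModuleCat.comp_apply, K.iCycles_d]
    rfl
  obtain ⟨x, hx⟩ := h _ hz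
  rw [← map_smul]
  exact homologyπ_eq_zero_of_iCycles_eq_d (by rw [map_smul, hx])

theorem moduleFinite_homology [IsNoetherianRing k] (i : ι) [Module.Finite k (K.X i)] :
    Module.Finite k (K.homology i) := by
  have : Module.Finite k (K.cycles i) :=
    Module.Finite.of_injective (K.iCycles i).hom ((ModuleCat.mono_iff_injective _).1 inferInstance)
  exact Module.Finite.of_surjective (K.homologyπ i).hom
    ((ModuleCat.epi_iff_surjective _).1 inferInstance)

end Homology

section GroupCohomology

variable {k G : Type u} [CommRing k] [Group G] (A : Rep.{u} k G) (n : ℕ)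

theorem sumLast_d [Fintype G] (f : (Fin (n + 1) → G) → A) :
    sumLast k (n + 1) ((inhomogeneousCochains.d A (n + 1)).hom f) =
      (inhomogeneousCochains.d A n).hom (sumLast k n f) +
        (-1 : k) ^ n • (Nat.card G : k) • f := by
  funext g
  have first_face : ∑ x : G, A.ρ ((Fin.snoc g x : Fin (n + 2) → G) 0)
      (f fun i => (Fin.snoc g x : Fin (n + 2) → G) i.succ) =
      A.ρ (g 0) (∑ x : G, f (Fin.snoc (fun i => g i.succ) x)) := by
    simp only [Fin.snoc_apply_zero, snoc_comp_succ, map_sum]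
  have last_face : ∑ x : G, f (Fin.contractNth (Fin.last (n + 1)) (· * ·)
      (Fin.snoc g x : Fin (n + 2) → G)) = (Nat.card G : k) • f g := by
    simp only [contractNth_last, Fin.init_snoc, Finset.sum_const, Finset.card_univ,
      Nat.card_eq_fintype_card, Nat.cast_smul_eq_nsmul]
  have sign : (-1 : k) ^ (n + 1 + 1) = (-1) ^ n := by ring
  rw [Pi.add_apply, Pi.smul_apply, Pi.smul_apply]
  simp only [sumLast_apply, inhomogeneousCochains.d_hom_apply]
  rw [Finset.sum_add_distrib, first_face, Finset.sum_comm, Fin.sum_univ_castSucc,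
    ← add_assoc]
  simp only [← Finset.smul_sum, sum_contractNth_castSucc_snoc, last_face, Fin.val_castSucc,
    Fin.val_last, sign]

theorem exists_d_eq_card_smul_of_d_eq_zero [Finite G] (f : (Fin (n + 1) → G) → A)
    (hf : (inhomogeneousCochains.d A (n + 1)).hom f = 0) :
    ∃ h : (Fin n → G) → A, (inhomogeneousCochains.d A n).hom h = (Nat.card G : k) • f := by
  cases nonempty_fintype G
  have d_sumLast : (inhomogeneousCochains.d A n).hom (sumLast k n f) =
      -((-1 : k) ^ n • (Nat.card G : k) • f) := by
    apply eq_neg_of_add_eq_zero_left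
    rw [← sumLast_d, hf, map_zero]
  refine ⟨-((-1 : k) ^ n • sumLast k n f), ?_⟩
  rw [map_neg, map_smul, d_sumLast, smul_neg, neg_neg, smul_smul, ← mul_pow]
  simp

theorem isTorsionBy_card_groupCohomology_succ [Finite G] :
    Module.IsTorsionBy k (groupCohomology A (n + 1)) (Nat.card G : k) := by
  refine isTorsionBy_homology_of_smul_cycle_eq_d (i := n) (l := n + 2) fun f hf => ?_
  rw [groupCohomology.inhomogeneousCochains.d_def] at hf ⊢
  exact exists_d_eq_card_smul_of_d_eq_zero A n f hf

theorem moduleFinite_groupCohomology [IsNoetherianRing k] [Finite G] [Module.Finite k A] :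
    Module.Finite k (groupCohomology A n) :=
  have : Module.Finite k ((groupCohomology.inhomogeneousCochains A).X n) :=
    inferInstanceAs (Module.Finite k ((Fin n → G) → A))
  moduleFinite_homology n

theorem isTorsion_groupCohomology_succ [Finite G] (hG : (Nat.card G : k) ∈ nonZeroDivisors k) :
    Module.IsTorsion k (groupCohomology A (n + 1)) :=
  fun {x} => ⟨⟨_, hG⟩, isTorsionBy_card_groupCohomology_succ A n (x := x)⟩

end GroupCohomology

/-- If `G` is a finite group and `M` is a `G`-module whose underlying abelian group is
finitely generated, then `H^n(G, M)` is finite for every `n ≥ 1`. -/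
theorem groupCohomology_finite_of_fg (G M : Type) [Group G] [Finite G] [AddCommGroup M]
    [DistribMulAction G M] (hfg : AddGroup.FG M) (n : ℕ) (hn : 1 ≤ n) :
    Finite (groupCohomology (repOfGModule G M) n) := by
  obtain ⟨m, rfl⟩ := Nat.exists_eq_add_of_le' hn
  -- Without `hV2` the `ℤ`-module structure found is the one every additive group has.
  have : @Module.Finite ℤ (repOfGModule G M) _ _ (repOfGModule G M).hV2 :=
    Module.Finite.iff_addGroup_fg.mpr hfg
  have := moduleFinite_groupCohomology (repOfGModule G M) (m + 1)
  have card_mem : (Nat.card G : ℤ) ∈ nonZeroDivisors ℤ :=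
    mem_nonZeroDivisors_of_ne_zero (Nat.cast_ne_zero.mpr Nat.card_pos.ne')
  exact Module.finite_of_fg_torsion _ (isTorsion_groupCohomology_succ _ m card_mem)
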